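/- Let F be a graph. If every (F, C4, C3)-free graph is 3-colorable, then every (F, C4, bull)-free graph is perfectly divisible. -/

import Mathlib

/-!
Write a *hole* for an induced cycle of length at least five, and call a set `X` of vertices of
`G[s]` *homogeneous* if it is proper, has at least two vertices, and every vertex of `s` outside `X`
is complete or anticomplete to `X`.

A stronger statement is proved by induction on `s`, with arbitrary positive vertex weights:
`s` splits into `P` and `W` such that `G[P]` is perfect and every clique of `W` is lighter than some
clique of `s` (`exists_division`). Unit weights give the theorem.

* If `G[s]` has a homogeneous set `X`, contract `X` to one of its vertices `x₀`, weighted by the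
  heaviest clique of `X`, and divide the smaller graph. If `x₀` lands in `W`, put all of `X` into `W`.
  If `x₀` lands in `P`, divide `X` as well and substitute its perfect part for `x₀`; the outcome is
  perfect by Lovász's substitution lemma (`Perf.substitute`).
* If `G[s]` has no homogeneous set and no triangle, it is 3-colourable by hypothesis. Let `W` be
  the non-isolated vertices of one colour. The rest is bipartite, hence perfect, and each vertex of
  `W` lies in an edge, which is heavier than that vertex.
* If `G[s]` has no homogeneous set but has a triangle, it has no hole (`no_hole_of_triangle`), hence
  is chordal, hence perfect by greedy colouring along simplicial vertices (Dirac), and `P = s` works.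

The absence of holes comes from three facts about a `(C₄, bull)`-free graph without homogeneous sets.
No vertex is complete to a hole (`IsHole.no_center`). No vertex has three consecutive neighbours on
a hole (`IsHole.no_clone`); bull-freeness then excludes two consecutive neighbours, so no hole edge
is in a triangle (`IsHole.no_triangle`). Finally, if an edge `r t` is in no triangle, then `t` is in no
triangle (`no_triangle_of_edge`), so the set of vertices in triangles is homogeneous unless it is
empty or everything; in the latter case every edge is in a triangle, and there can be no hole.
-/

open SimpleGraph

/-- `H` is isomorphic to an induced subgraph of `G`. -/
def ContainsInduced {α β : Type*} (G : SimpleGraph α) (H : SimpleGraph β) : Prop :=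
  ∃ f : β ↪ α, ∀ a b, G.Adj (f a) (f b) ↔ H.Adj a b

/-- `G` is `H`-free: `G` does not contain `H` as an induced subgraph. -/
def IsFree {α β : Type*} (G : SimpleGraph α) (H : SimpleGraph β) : Prop :=
  ¬ ContainsInduced G H

/-- The clique number of the subgraph of `G` induced on `s`. -/
noncomputable def cliqueNumOn {V : Type*} (G : SimpleGraph V) (s : Set V) : ℕ :=
  sSup {n | ∃ t : Finset V, ↑t ⊆ s ∧ G.IsNClique n t}

/-- The maximum `w`-weight of a clique of `G` contained in `s`. -/
noncomputable def wCliqueNumOn {V : Type*} (G : SimpleGraph V) (w : V → ℕ) (s : Set V) : ℕ :=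
  sSup {n | ∃ t : Finset V, ↑t ⊆ s ∧ G.IsClique (↑t : Set V) ∧ ∑ v ∈ t, w v = n}

/-- A graph is perfect if every induced subgraph has chromatic number equal to clique number. -/
def IsPerfect {V : Type*} (G : SimpleGraph V) : Prop :=
  ∀ s : Set V, (G.induce s).chromaticNumber = (cliqueNumOn G s : ℕ∞)

/-- `G` is perfectly divisible: every (nonempty) induced subgraph `H` of `G` admits a partition
`(A, B)` of its vertex set with `H[A]` perfect and `ω(H[B]) < ω(H)`. -/
def PerfectlyDivisible {V : Type*} (G : SimpleGraph V) : Prop :=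
  ∀ s : Set V, s.Nonempty →
    ∃ A B : Set V, A ∪ B = s ∧ A ∩ B = ∅ ∧
      IsPerfect (G.induce A) ∧ cliqueNumOn G B < cliqueNumOn G s

/-- `G` is perfectly weight divisible: for every positive integer weight function `w` and every
(nonempty) induced subgraph `H` of `G`, there is a partition `(P, W)` of its vertex set with
`H[P]` perfect and the maximum weight of a clique of `H[W]` less than that of `H`. -/
def PerfectlyWeightDivisible {V : Type*} (G : SimpleGraph V) : Prop :=
  ∀ w : V → ℕ, (∀ v, 0 < w v) →
    ∀ s : Set V, s.Nonempty →
      ∃ P W : Set V, P ∪ W = s ∧ P ∩ W = ∅ ∧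
        IsPerfect (G.induce P) ∧ wCliqueNumOn G w W < wCliqueNumOn G w s

/-- The bull: a triangle `{0,1,2}` with pendant edges `0-3` and `1-4`. -/
def bull : SimpleGraph (Fin 5) :=
  SimpleGraph.fromEdgeSet {s(0,1), s(0,2), s(1,2), s(0,3), s(1,4)}

/-- The house: the complement of the path on 5 vertices. -/
def house : SimpleGraph (Fin 5) := (SimpleGraph.pathGraph 5)ᶜ

/-- The hammer: a triangle `{0,1,2}` together with the path `2-3-4`. -/
def hammer : SimpleGraph (Fin 5) :=
  SimpleGraph.fromEdgeSet {s(0,1), s(0,2), s(1,2), s(2,3), s(3,4)}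

/-- The diamond: `K₄` minus an edge. -/
def diamond : SimpleGraph (Fin 4) :=
  SimpleGraph.fromEdgeSet {s(0,1), s(0,2), s(0,3), s(1,2), s(1,3)}

/-- The odd torch built on the cycle `C_k` from a set `S` of cycle vertices: two new adjacent
vertices are added, the first adjacent exactly to `S`, the second to no cycle vertex. -/
def oddTorch (k : ℕ) (S : Set (Fin k)) : SimpleGraph (Fin k ⊕ Fin 2) :=
  SimpleGraph.fromRel (fun a b =>
    match a, b with
    | Sum.inl i, Sum.inl j => (SimpleGraph.cycleGraph k).Adj i j
    | Sum.inl i, Sum.inr u => u = 0 ∧ i ∈ S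
    | Sum.inr _, Sum.inl _ => False
    | Sum.inr u, Sum.inr v => u ≠ v)

/-- `G` contains no odd torch as an induced subgraph. -/
def OddTorchFree {V : Type*} (G : SimpleGraph V) : Prop :=
  ∀ (k : ℕ) (S : Set (Fin k)), 5 ≤ k → Odd k → S.Nonempty →
    (∀ i ∈ S, ∀ j ∈ S, ¬ (SimpleGraph.cycleGraph k).Adj i j) →
    IsFree G (oddTorch k S)

/-- `G` is locally perfect: the neighbourhood of each vertex induces a perfect graph. -/
def LocallyPerfect {V : Type*} (G : SimpleGraph V) : Prop :=
  ∀ v : V, IsPerfect (G.induce (G.neighborSet v))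

/-- `N(X)`: vertices outside `X` with a neighbour in `X`. -/
def nbhd {V : Type*} (G : SimpleGraph V) (X : Set V) : Set V :=
  {u | u ∉ X ∧ ∃ x ∈ X, G.Adj u x}

/-- `M(X) = V(G) \ (X ∪ N(X))`: vertices outside `X` with no neighbour in `X`. -/
def antiNbhd {V : Type*} (G : SimpleGraph V) (X : Set V) : Set V :=
  {u | u ∉ X ∧ ∀ x ∈ X, ¬ G.Adj u x}

/-- Minimally non-perfectly divisible. -/
def MNPD {V : Type*} (G : SimpleGraph V) : Prop :=
  ¬ PerfectlyDivisible G ∧ ∀ s : Set V, s ≠ Set.univ → PerfectlyDivisible (G.induce s)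

/-- Minimally non-perfectly weight divisible. -/
def MNWD {V : Type*} (G : SimpleGraph V) : Prop :=
  ¬ PerfectlyWeightDivisible G ∧ ∀ s : Set V, s ≠ Set.univ → PerfectlyWeightDivisible (G.induce s)

/-! ### Forbidden subgraphs -/

section Forbidden

variable {V : Type*} {G : SimpleGraph V}

theorem no_C4 (h : IsFree G (SimpleGraph.cycleGraph 4)) {a b c d : V}
    (hab : G.Adj a b) (hbc : G.Adj b c) (hcd : G.Adj c d) (hda : G.Adj d a)
    (hac : ¬ G.Adj a c) (hbd : ¬ G.Adj b d) (nac : a ≠ c) (nbd : b ≠ d) : False := by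
  apply h
  have e1 := hab.ne
  have e2 := hbc.ne
  have e3 := hcd.ne
  have e4 := hda.ne
  refine ⟨⟨![a, b, c, d], ?_⟩, ?_⟩
  · intro i j hij
    fin_cases i <;> fin_cases j <;> simp_all
  · intro i j
    change G.Adj (![a, b, c, d] i) (![a, b, c, d] j) ↔ _
    have h01 : (cycleGraph 4).Adj 0 1 := by decide
    have h02 : ¬ (cycleGraph 4).Adj 0 2 := by decide
    have h03 : (cycleGraph 4).Adj 0 3 := by decide
    have h12 : (cycleGraph 4).Adj 1 2 := by decide
    have h13 : ¬ (cycleGraph 4).Adj 1 3 := by decide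
    have h23 : (cycleGraph 4).Adj 2 3 := by decide
    fin_cases i <;> fin_cases j <;>
      simp [h01, h02, h03, h12, h13, h23, h01.symm, h03.symm, h12.symm, h23.symm,
        mt SimpleGraph.Adj.symm h02, mt SimpleGraph.Adj.symm h13,
        hab, hbc, hcd, hda, hab.symm, hbc.symm, hcd.symm, hda.symm, hac, hbd,
        mt SimpleGraph.Adj.symm hac, mt SimpleGraph.Adj.symm hbd]

/-- The bull is presented as the triangle `a b c` with pendants `d` at `a` and `e` at `b`;
distinctness of the five vertices follows from the adjacencies. -/
theorem no_bull (h : IsFree G bull) {a b c d e : V}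
    (hab : G.Adj a b) (hac : G.Adj a c) (hbc : G.Adj b c) (had : G.Adj a d) (hbe : G.Adj b e)
    (hae : ¬ G.Adj a e) (hbd : ¬ G.Adj b d) (hcd : ¬ G.Adj c d) (hce : ¬ G.Adj c e)
    (hde : ¬ G.Adj d e) : False := by
  apply h
  have e1 := hab.ne
  have e2 := hac.ne
  have e3 := hbc.ne
  have e4 := had.ne
  have e5 := hbe.ne
  have n1 : a ≠ e := by rintro rfl; exact hde had.symm
  have n2 : b ≠ d := by rintro rfl; exact hde hbe
  have n3 : c ≠ d := by rintro rfl; exact hbd hbc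
  have n4 : c ≠ e := by rintro rfl; exact hae hac
  have n5 : d ≠ e := by rintro rfl; exact hae had
  refine ⟨⟨![a, b, c, d, e], ?_⟩, ?_⟩
  · intro i j hij
    fin_cases i <;> fin_cases j <;> simp_all
  · intro i j
    change G.Adj (![a, b, c, d, e] i) (![a, b, c, d, e] j) ↔ _
    fin_cases i <;> fin_cases j <;>
      simp [bull, hab, hac, hbc, had, hbe, hab.symm, hac.symm, hbc.symm, had.symm, hbe.symm,
        hae, hbd, hcd, hce, hde,
        mt SimpleGraph.Adj.symm hae, mt SimpleGraph.Adj.symm hbd, mt SimpleGraph.Adj.symm hcd,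
        mt SimpleGraph.Adj.symm hce, mt SimpleGraph.Adj.symm hde]

theorem IsFree.induce {β : Type*} {H : SimpleGraph β} (h : IsFree G H)
    (s : Set V) : IsFree (G.induce s) H := by
  rintro ⟨f, hf⟩
  exact h ⟨f.trans (Function.Embedding.subtype _), fun a b => hf a b⟩

end Forbidden

/-! ### Perfect sets -/

section Perfect

variable {V : Type*} [DecidableEq V] (G : SimpleGraph V)

/-- `G[A]` is perfect, phrased inside `V`: whenever all cliques of a subset `t` of `A` have at
most `n` vertices, `t` has a proper colouring with the colours `0, …, n - 1`. -/
def Perf (A : Finset V) : Prop :=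
  ∀ t ⊆ A, ∀ n : ℕ, (∀ K ⊆ t, G.IsClique (K : Set V) → K.card ≤ n) →
    ∃ col : V → ℕ, (∀ v ∈ t, col v < n) ∧ ∀ u ∈ t, ∀ v ∈ t, G.Adj u v → col u ≠ col v

variable {G}

theorem perf_of_two_coloring {A : Finset V} (c : V → Bool)
    (hc : ∀ u ∈ A, ∀ v ∈ A, G.Adj u v → c u ≠ c v) : Perf G A := by
  intro t ht n hn
  rcases Nat.lt_or_ge n 2 with h2 | h2
  · refine ⟨fun _ => 0, fun v hv => ?_, fun u hu v hv huv => ?_⟩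
    · have := hn {v} (by simpa using hv) (by simp)
      exact Nat.lt_of_lt_of_le Nat.zero_lt_one (by simpa using this)
    · have := hn {u, v} (by intro x; simp; rintro (rfl | rfl) <;> assumption)
        (by simp [SimpleGraph.isClique_iff, huv])
      rw [Finset.card_pair huv.ne] at this
      omega
  · refine ⟨fun v => if c v then 1 else 0, fun v hv => ?_, fun u hu v hv huv => ?_⟩
    · dsimp only; split_ifs <;> omega
    · have := hc u (ht hu) v (ht hv) huv
      dsimp only
      cases h1 : c u <;> cases h3 : c v <;> simp_all

/-- Greedy colouring: a set each of whose nonempty subsets has a simplicial vertex is perfect. -/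
theorem perf_of_simplicial {A : Finset V}
    (h : ∀ t ⊆ A, t.Nonempty → ∃ u ∈ t, ∀ x ∈ t, ∀ y ∈ t, G.Adj u x → G.Adj u y → x ≠ y →
      G.Adj x y) : Perf G A := by
  intro t
  induction t using Finset.strongInduction with
  | H t ih =>
  intro ht n hn
  rcases t.eq_empty_or_nonempty with rfl | hne
  · exact ⟨fun _ => 0, by simp, by simp⟩
  obtain ⟨u, hu, hs⟩ := h t ht hne
  obtain ⟨col, hlt, hp⟩ := ih (t.erase u) (Finset.erase_ssubset hu)
    ((Finset.erase_subset _ _).trans ht) n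
    (fun K hK => hn K (hK.trans (Finset.erase_subset _ _)))
  classical
  set N := t.filter (fun x => G.Adj u x) with hN
  have hcl : (insert u N).card ≤ n := by
    apply hn
    · intro x hx
      simp [hN] at hx
      rcases hx with rfl | hx
      exacts [hu, hx.1]
    · rw [Finset.coe_insert, SimpleGraph.isClique_insert]
      refine ⟨?_, fun b hb _ => by simp [hN] at hb; exact hb.2⟩
      intro x hx y hy hxy
      simp [hN] at hx hy
      exact hs x hx.1 y hy.1 hx.2 hy.2 hxy
  have huN : u ∉ N := by simp [hN]
  rw [Finset.card_insert_of_notMem huN] at hcl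
  obtain ⟨k, hk, hkN⟩ : ∃ k ∈ Finset.range n, k ∉ N.image col := by
    by_contra! hcon
    have h1 := Finset.card_le_card (show Finset.range n ⊆ N.image col from hcon)
    have h2 := Finset.card_image_le (s := N) (f := col)
    simp at h1
    omega
  simp only [Finset.mem_range] at hk
  have hkN' : ∀ x ∈ t, G.Adj u x → col x ≠ k := by
    intro x hx hux hxk
    exact hkN (Finset.mem_image.2 ⟨x, by simp [hN, hx, hux], hxk⟩)
  refine ⟨Function.update col u k, fun v hv => ?_, fun x hx y hy hxy => ?_⟩
  · by_cases hvu : v = u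
    · subst hvu; simpa using hk
    · simpa [hvu] using hlt v (by simp [hvu, hv])
  · by_cases hxu : x = u
    · subst hxu
      simpa [hxy.ne'] using (hkN' y hy hxy).symm
    · by_cases hyu : y = u
      · subst hyu
        simpa [hxu] using hkN' x hx hxy.symm
      · simpa [hxu, hyu] using hp x (by simp [hxu, hx]) y (by simp [hyu, hy]) hxy

/-- A clique of size `n` receives every colour of a proper colouring with `n` colours. -/
theorem exists_color_of_clique {t K : Finset V} {n : ℕ} {col : V → ℕ}
    (hlt : ∀ v ∈ t, col v < n) (hp : ∀ u ∈ t, ∀ v ∈ t, G.Adj u v → col u ≠ col v)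
    (hKt : K ⊆ t) (hK : G.IsClique (K : Set V)) (hcard : n ≤ K.card) {k : ℕ} (hk : k < n) :
    ∃ x ∈ K, col x = k := by
  have hinj : Set.InjOn col K := by
    intro x hx y hy hxy
    by_contra hne
    exact hp x (hKt hx) y (hKt hy) (hK hx hy hne) hxy
  have h1 : (K.image col).card = K.card := Finset.card_image_of_injOn hinj
  have h2 : K.image col = Finset.range n := by
    apply Finset.eq_of_subset_of_card_le
    · intro c hc
      obtain ⟨x, hx, rfl⟩ := Finset.mem_image.1 hc
      simpa using hlt x (hKt hx)
    · simp [h1, hcard]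
  have : k ∈ K.image col := by rw [h2]; simpa using hk
  simpa using this

/-- Replacing the part of a clique inside a homogeneous set `X` by another clique of `X`. -/
theorem isClique_replace {s X K L : Finset V}
    (hX : ∀ v ∈ s, v ∉ X → ∀ x ∈ X, ∀ y ∈ X, G.Adj v x → G.Adj v y)
    (hKs : K ⊆ s) (hK : G.IsClique (K : Set V)) (hKX : (K ∩ X).Nonempty)
    (hLX : L ⊆ X) (hL : G.IsClique (L : Set V)) :
    G.IsClique ((K \ X ∪ L : Finset V) : Set V) := by
  obtain ⟨z, hz⟩ := hKX
  rw [Finset.mem_inter] at hz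
  have key : ∀ v ∈ K, v ∉ X → ∀ x ∈ L, G.Adj v x := fun v hv hvX x hx =>
    hX v (hKs hv) hvX z hz.2 x (hLX hx) (hK hv hz.1 (by rintro rfl; exact hvX hz.2))
  intro x hx y hy hxy
  simp only [Finset.coe_union, Finset.coe_sdiff, Set.mem_union, Set.mem_sdiff,
    Finset.mem_coe] at hx hy
  rcases hx with hx | hx <;> rcases hy with hy | hy
  · exact hK hx.1 hy.1 hxy
  · exact key x hx.1 hx.2 y hy
  · exact (key y hy.1 hy.2 x hx).symm
  · exact hL hx hy hxy

/-- A clique of maximum weight. -/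
theorem exists_max_clique (w : V → ℕ) (s : Finset V) :
    ∃ K ⊆ s, G.IsClique (K : Set V) ∧
      ∀ L ⊆ s, G.IsClique (L : Set V) → ∑ v ∈ L, w v ≤ ∑ v ∈ K, w v := by
  classical
  obtain ⟨K, hK, hmax⟩ := Finset.exists_max_image
    (s.powerset.filter fun K : Finset V => G.IsClique (K : Set V)) (fun K => ∑ v ∈ K, w v)
    ⟨∅, by simp⟩
  simp only [Finset.mem_filter, Finset.mem_powerset] at hK hmax
  exact ⟨K, hK.1, hK.2, fun L h1 h2 => hmax L ⟨h1, h2⟩⟩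

/-- Lovász's substitution lemma: if `P` meets a homogeneous set `X` exactly in `x₀`, then
replacing `x₀` by a perfect subset `Q` of `X` keeps `P` perfect. -/
theorem Perf.substitute {s X P Q : Finset V} {x₀ : V}
    (hX : ∀ v ∈ s, v ∉ X → ∀ x ∈ X, ∀ y ∈ X, G.Adj v x → G.Adj v y)
    (hXs : X ⊆ s) (hx₀ : x₀ ∈ X) (hPs : P ⊆ s) (hPX : P ∩ X = {x₀}) (hQX : Q ⊆ X)
    (hP : Perf G P) (hQ : Perf G Q) : Perf G (P.erase x₀ ∪ Q) := by
  have hPout : ∀ v ∈ P, v ≠ x₀ → v ∉ X := by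
    intro v hv hne hvX
    have : v ∈ P ∩ X := Finset.mem_inter.2 ⟨hv, hvX⟩
    rw [hPX] at this
    exact hne (by simpa using this)
  have hx₀P : x₀ ∈ P := by
    have : x₀ ∈ P ∩ X := by rw [hPX]; simp
    exact (Finset.mem_inter.1 this).1
  intro t
  induction t using Finset.strongInduction with
  | H t ih =>
  intro ht n hn
  have hts : t ⊆ s := by
    intro v hv
    rcases Finset.mem_union.1 (ht hv) with h | h
    · exact hPs (Finset.mem_of_mem_erase h)
    · exact hXs (hQX h)
  have htout : ∀ v ∈ t, v ∉ X → v ∈ P := by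
    intro v hv hvX
    rcases Finset.mem_union.1 (ht hv) with h | h
    · exact Finset.mem_of_mem_erase h
    · exact absurd (hQX h) hvX
  have htin : ∀ v ∈ t, v ∈ X → v ∈ Q := by
    intro v hv hvX
    rcases Finset.mem_union.1 (ht hv) with h | h
    · exact absurd hvX (hPout v (Finset.mem_of_mem_erase h) (Finset.ne_of_mem_erase h))
    · exact h
  rcases (t ∩ X).eq_empty_or_nonempty with hemp | ⟨x₁, hx₁⟩
  · refine hP t (fun v hv => htout v hv fun hvX => ?_) n hn
    have : v ∈ t ∩ X := Finset.mem_inter.2 ⟨hv, hvX⟩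
    simp [hemp] at this
  have hx₁' := Finset.mem_inter.1 hx₁
  -- Colour `t` with `t ∩ X` contracted to `x₀`.
  obtain ⟨c, hclt, hcp⟩ := hP (insert x₀ (t \ X))
    (by
      intro v hv
      rcases Finset.mem_insert.1 hv with rfl | h
      · exact hx₀P
      · exact htout v (Finset.mem_sdiff.1 h).1 (Finset.mem_sdiff.1 h).2) n
    (by
      intro K hK hKc
      by_cases hx : x₀ ∈ K
      · have h1 := isClique_replace (L := {x₁}) hX
          (hK.trans (by
            intro v hv
            rcases Finset.mem_insert.1 hv with rfl | h
            · exact hXs hx₀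
            · exact hts (Finset.mem_sdiff.1 h).1)) hKc ⟨x₀, by simp [hx, hx₀]⟩
          (by simpa using hx₁'.2) (by simp)
        have h2 := hn _ (by
          intro v hv
          rcases Finset.mem_union.1 hv with h | h
          · have h' := Finset.mem_sdiff.1 h
            rcases Finset.mem_insert.1 (hK h'.1) with rfl | h3
            · exact absurd hx₀ h'.2
            · exact (Finset.mem_sdiff.1 h3).1
          · rw [Finset.mem_singleton] at h
            exact h ▸ hx₁'.1) h1
        have h3 : K ⊆ insert x₀ (K \ X) := by
          intro v hv
          rcases Finset.mem_insert.1 (hK hv) with h | h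
          · simp [h]
          · simp [hv, (Finset.mem_sdiff.1 h).2]
        have h4 := Finset.card_le_card h3
        have h5 := Finset.card_insert_le x₀ (K \ X)
        rw [Finset.card_union_of_disjoint (by simp [hx₁'.2])] at h2
        simp at h2
        omega
      · apply hn _ _ hKc
        intro v hv
        rcases Finset.mem_insert.1 (hK hv) with rfl | h
        · exact absurd hv hx
        · exact (Finset.mem_sdiff.1 h).1)
  -- Colour `t ∩ X` optimally.
  obtain ⟨M, hMs, hMc, hMmax⟩ := exists_max_clique (G := G) (fun _ => 1) (t ∩ X)
  simp only [Finset.sum_const, smul_eq_mul, mul_one] at hMmax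
  obtain ⟨d, hdlt, hdp⟩ := hQ (t ∩ X)
    (fun v hv => htin v (Finset.mem_inter.1 hv).1 (Finset.mem_inter.1 hv).2) M.card hMmax
  -- The stable set `S` meets all cliques of size `n`; it becomes the last colour class.
  set S := t.filter (fun v => (v ∉ X ∧ c v = c x₀) ∨ (v ∈ X ∧ d v = d x₁)) with hS
  have hx₁S : x₁ ∈ S := by simp [hS, hx₁']
  have hSX : ∀ u ∈ t, u ∉ X → c u = c x₀ → ∀ x ∈ X, ¬ G.Adj u x := by
    intro u hu huX hcu x hx hux
    exact hcp u (by simp [hu, huX]) x₀ (by simp)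
      (hX u (hts hu) huX x hx x₀ hx₀ hux) hcu
  have hSstab : ∀ u ∈ S, ∀ v ∈ S, ¬ G.Adj u v := by
    intro u hu v hv huv
    simp only [hS, Finset.mem_filter] at hu hv
    obtain ⟨hut, hu⟩ := hu
    obtain ⟨hvt, hv⟩ := hv
    rcases hu with hu | hu <;> rcases hv with hv | hv
    · exact hcp u (by simp [hut, hu]) v (by simp [hvt, hv]) huv (hu.2.trans hv.2.symm)
    · exact hSX u hut hu.1 hu.2 v hv.1 huv
    · exact hSX v hvt hv.1 hv.2 u hu.1 huv.symm
    · exact hdp u (by simp [hut, hu]) v (by simp [hvt, hv]) huv (hu.2.trans hv.2.symm)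
  have hnpos : 0 < n := lt_of_le_of_lt (Nat.zero_le _) (hclt x₀ (by simp))
  have hmeet : ∀ K ⊆ t \ S, G.IsClique (K : Set V) → K.card ≤ n - 1 := by
    intro K hK hKc
    have hKt : K ⊆ t := hK.trans Finset.sdiff_subset
    by_contra hlt
    have hKn : n ≤ K.card := by omega
    have hdisj : ∀ v ∈ K, v ∉ S := fun v hv => (Finset.mem_sdiff.1 (hK hv)).2
    rcases (K ∩ X).eq_empty_or_nonempty with he | hne
    · have hout : ∀ v ∈ K, v ∉ X := by
        intro v hv hvX
        have : v ∈ K ∩ X := Finset.mem_inter.2 ⟨hv, hvX⟩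
        simp [he] at this
      obtain ⟨x, hx, hcx⟩ := exists_color_of_clique hclt hcp
        (K := K) (fun v hv => by simp [hKt hv, hout v hv]) hKc hKn (hclt x₀ (by simp))
      exact hdisj x hx (by simp [hS, hKt hx, hout x hx, hcx])
    · have h1 := isClique_replace hX (hKt.trans hts) hKc hne
        (hMs.trans Finset.inter_subset_right) hMc
      have h2 := hn _ (by
        intro v hv
        rcases Finset.mem_union.1 hv with h | h
        · exact hKt (Finset.mem_sdiff.1 h).1
        · exact (Finset.mem_inter.1 (hMs h)).1) h1
      rw [Finset.card_union_of_disjoint (Finset.disjoint_left.2 fun v hv hvM =>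
        (Finset.mem_sdiff.1 hv).2 (Finset.mem_inter.1 (hMs hvM)).2)] at h2
      have h3 := Finset.card_sdiff_add_card_inter K X
      have hsub : K ∩ X ⊆ t ∩ X := Finset.inter_subset_inter_right hKt
      obtain ⟨x, hx, hdx⟩ := exists_color_of_clique hdlt hdp (K := K ∩ X) hsub
        (hKc.subset (by simp)) (by omega) (hdlt x₁ hx₁)
      rw [Finset.mem_inter] at hx
      exact hdisj x hx.1 (by simp [hS, hKt hx.1, hx.2, hdx])
  obtain ⟨e, helt, hep⟩ := ih (t \ S)
    (Finset.sdiff_ssubset (Finset.filter_subset _ _) ⟨x₁, hx₁S⟩)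
    (Finset.sdiff_subset.trans ht) (n - 1) hmeet
  refine ⟨fun v => if v ∈ S then n - 1 else e v, fun v hv => ?_, fun u hu v hv huv => ?_⟩
  · dsimp only
    split_ifs with h
    · omega
    · have := helt v (Finset.mem_sdiff.2 ⟨hv, h⟩)
      omega
  · dsimp only
    split_ifs with h1 h2 h2
    · exact absurd huv (hSstab u h1 v h2)
    · have := helt v (Finset.mem_sdiff.2 ⟨hv, h2⟩)
      omega
    · have := helt u (Finset.mem_sdiff.2 ⟨hu, h1⟩)
      omega
    · exact hep u (Finset.mem_sdiff.2 ⟨hu, h1⟩) v (Finset.mem_sdiff.2 ⟨hv, h2⟩) huv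

end Perfect

/-! ### Holes -/

section Holes

variable {V : Type*} {G : SimpleGraph V} {k : ℕ} {f : ZMod k → V}

/-- `f` traverses a hole of `G` of length `k ≥ 5`: an induced cycle, indexed cyclically. Injectivity
of `f` follows from the adjacencies. -/
def IsHole (G : SimpleGraph V) {k : ℕ} (f : ZMod k → V) : Prop :=
  5 ≤ k ∧ ∀ i j, G.Adj (f i) (f j) ↔ j = i + 1 ∨ i = j + 1

theorem zmod_ne {k : ℕ} (hk : 5 ≤ k) :
    (1 : ZMod k) ≠ 0 ∧ (2 : ZMod k) ≠ 0 ∧ (3 : ZMod k) ≠ 0 ∧ (4 : ZMod k) ≠ 0 := by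
  have key : ∀ n : ℕ, 0 < n → n < k → ((n : ℕ) : ZMod k) ≠ 0 := by
    intro n h0 hn h
    rw [ZMod.natCast_eq_zero_iff] at h
    exact absurd (Nat.le_of_dvd h0 h) (by omega)
  refine ⟨?_, ?_, ?_, ?_⟩
  · exact_mod_cast key 1 (by omega) (by omega)
  · exact_mod_cast key 2 (by omega) (by omega)
  · exact_mod_cast key 3 (by omega) (by omega)
  · exact_mod_cast key 4 (by omega) (by omega)

theorem IsHole.shift (h : IsHole G f) (c : ZMod k) : IsHole G (fun j => f (j + c)) :=
  ⟨h.1, fun i j => by rw [h.2]; grind⟩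

theorem IsHole.injective (h : IsHole G f) : Function.Injective f := by
  intro i j hij
  obtain ⟨h1, h2, h3, h4⟩ := zmod_ne h.1
  have e1 : G.Adj (f j) (f (i + 1)) := hij ▸ (h.2 _ _).2 (Or.inl rfl)
  have e2 : G.Adj (f j) (f (i - 1)) := hij ▸ (h.2 _ _).2 (Or.inr (by ring))
  rw [h.2] at e1 e2
  rcases e1 with e1 | e1
  · linear_combination e1
  · rcases e2 with e2 | e2
    · exact absurd (show (4 : ZMod k) = 0 by linear_combination -e1 - e2) h4
    · linear_combination -e2

theorem IsHole.adj_succ (h : IsHole G f) {i j : ZMod k} (e : j = i + 1) : G.Adj (f i) (f j) :=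
  (h.2 i j).2 (Or.inl e)

theorem IsHole.not_adj (h : IsHole G f) {i j : ZMod k} (e : j ≠ i + 1) (e' : i ≠ j + 1) :
    ¬ G.Adj (f i) (f j) := by
  rw [h.2]; tauto

theorem IsHole.not_adj_two (h : IsHole G f) {i j : ZMod k} (e : j = i + 2) :
    ¬ G.Adj (f i) (f j) := by
  obtain ⟨h1, h2, h3, h4⟩ := zmod_ne h.1
  subst e
  exact h.not_adj (fun e => h1 (by linear_combination e)) (fun e => h3 (by linear_combination -e))

theorem IsHole.not_adj_three (h : IsHole G f) {i j : ZMod k} (e : j = i + 3) :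
    ¬ G.Adj (f i) (f j) := by
  obtain ⟨h1, h2, h3, h4⟩ := zmod_ne h.1
  subst e
  exact h.not_adj (fun e => h2 (by linear_combination e)) (fun e => h4 (by linear_combination -e))

theorem IsHole.ne_two (h : IsHole G f) {i j : ZMod k} (e : j = i + 2) : f i ≠ f j := by
  obtain ⟨h1, h2, h3, h4⟩ := zmod_ne h.1
  subst e
  exact fun e => h2 (by linear_combination -(h.injective e))

/-- Two nonadjacent vertices that differ on some vertex are distinct. -/
theorem ne_of_adj_not {u v w : V} (h : G.Adj u w) (h' : ¬ G.Adj v w) : u ≠ v := by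
  rintro rfl; exact h' h

/-- A property that holds somewhere but not everywhere on the cycle fails just after some
position where it holds. -/
theorem exists_boundary [NeZero k] {P : ZMod k → Prop} {i j : ZMod k} (hi : P i) (hj : ¬ P j) :
    ∃ m, P m ∧ ¬ P (m + 1) := by
  by_contra! hcon
  have : ∀ n : ℕ, P (i + n) := by
    intro n
    induction n with
    | zero => simpa using hi
    | succ n ih => have := hcon _ ih; push_cast; rwa [← add_assoc]
  apply hj
  have := this (j - i).val
  rwa [ZMod.natCast_zmod_val, add_sub_cancel] at this

variable (hC4 : IsFree G (SimpleGraph.cycleGraph 4)) (hbull : IsFree G bull)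
include hbull

/-- No vertex sees exactly the two middle vertices of four consecutive vertices of a hole. -/
theorem IsHole.extend (h : IsHole G f) {u : V} {i : ZMod k}
    (h1 : G.Adj u (f i)) (h2 : G.Adj u (f (i + 1))) :
    G.Adj u (f (i - 1)) ∨ G.Adj u (f (i + 2)) := by
  by_contra! hcon
  exact no_bull hbull (a := f (i + 1)) (b := f i) (c := u) (d := f (i + 2)) (e := f (i - 1))
    (h.adj_succ rfl).symm h2.symm h1.symm (h.adj_succ (by ring)) (h.adj_succ (by ring)).symm
    (fun e => h.not_adj_two (by ring) e.symm) (h.not_adj_two (by ring)) hcon.2 hcon.1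
    (fun e => h.not_adj_three (by ring) e.symm)

include hC4

/-- A vertex with four consecutive neighbours on a hole is complete to the hole. -/
theorem IsHole.center_of_four (h : IsHole G f) {u : V} {i : ZMod k}
    (h0 : G.Adj u (f i)) (h1 : G.Adj u (f (i + 1))) (h2 : G.Adj u (f (i + 2)))
    (h3 : G.Adj u (f (i + 3))) (j : ZMod k) : G.Adj u (f j) := by
  obtain ⟨n1, n2, n3, n4⟩ := zmod_ne h.1
  have : NeZero k := ⟨by have := h.1; omega⟩
  have step : ∀ i : ZMod k, G.Adj u (f i) → G.Adj u (f (i + 2)) → G.Adj u (f (i + 3)) →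
      G.Adj u (f (i + 4)) := by
    intro i a0 a2 a3
    by_contra a4
    by_cases n5 : (5 : ZMod k) = 0
    · refine no_C4 hC4 (a := u) (b := f (i + 3)) (c := f (i + 4)) (d := f i) a3
        (h.adj_succ (by ring)) (h.adj_succ (by linear_combination -n5)) a0.symm a4
        (fun e => h.not_adj_three rfl e.symm)
        (ne_of_adj_not a2 fun e => h.not_adj_two (by ring) e.symm)
        (h.ne_two (by linear_combination -n5))
    · refine no_bull hbull (a := u) (b := f (i + 3)) (c := f (i + 2)) (d := f i) (e := f (i + 4))
        a3 a2 (h.adj_succ (by ring)).symm a0 (h.adj_succ (by ring)) a4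
        (fun e => h.not_adj_three rfl e.symm) (fun e => h.not_adj_two rfl e.symm)
        (h.not_adj_two (by ring)) (h.not_adj (fun e => n3 ?_) fun e => n5 ?_)
      · linear_combination e
      · linear_combination -e
  have key : ∀ n : ℕ, G.Adj u (f (i + n)) ∧ G.Adj u (f (i + n + 1)) ∧ G.Adj u (f (i + n + 2)) ∧
      G.Adj u (f (i + n + 3)) := by
    intro n
    induction n with
    | zero => simp [h0, h1, h2, h3]
    | succ n ih =>
      have h4 := step _ ih.1 ih.2.2.1 ih.2.2.2
      push_cast
      refine ⟨?_, ?_, ?_, ?_⟩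
      · convert ih.2.1 using 2; ring
      · convert ih.2.2.1 using 2; ring
      · convert ih.2.2.2 using 2; ring
      · convert h4 using 2; ring
  have := (key (j - i).val).1
  rwa [ZMod.natCast_zmod_val, add_sub_cancel] at this

/-- A vertex with three consecutive neighbours on a hole and not complete to it has no further
neighbours on the hole. -/
theorem IsHole.clone_exact (h : IsHole G f) {u : V} (hu : ¬ ∀ j, G.Adj u (f j))
    (h0 : G.Adj u (f (-1))) (h1 : G.Adj u (f 0)) (h2 : G.Adj u (f 1)) {j : ZMod k}
    (hj : G.Adj u (f j)) : j = -1 ∨ j = 0 ∨ j = 1 := by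
  by_contra! hcon
  have a2 : ¬ G.Adj u (f 2) := by
    intro a
    refine hu (h.center_of_four hC4 hbull (i := -1) h0 ?_ ?_ ?_) <;> ring_nf <;> assumption
  have a2' : ¬ G.Adj u (f (-2)) := by
    intro a
    refine hu (h.center_of_four hC4 hbull (i := -2) a ?_ ?_ ?_) <;> ring_nf <;> assumption
  by_cases b3 : j = -3
  · subst b3
    refine no_C4 hC4 (a := u) (b := f (-1)) (c := f (-2)) (d := f (-3)) h0
      (h.adj_succ (by ring)).symm (h.adj_succ (by ring)).symm hj.symm a2'
      (fun e => h.not_adj_two (by ring) e.symm) (ne_of_adj_not h1 (h.not_adj_two (by ring)))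
      (h.ne_two (by ring)).symm
  · have b2 : j ≠ 2 := by rintro rfl; exact a2 hj
    have b2' : j ≠ -2 := by rintro rfl; exact a2' hj
    refine no_bull hbull (a := u) (b := f (-1)) (c := f 0) (d := f j) (e := f (-2))
      h0 h1 (h.adj_succ (by ring)) hj (h.adj_succ (by ring)).symm a2'
      (h.not_adj ?_ ?_) (h.not_adj ?_ ?_) (fun e => h.not_adj_two (by ring) e.symm)
      (h.not_adj ?_ ?_) <;> grind

/-- If two holes `f`, `f'` agree away from position `0`, then no vertex `p ≠ f' 0` sees
`f 0` and `f 1` but not `f' 0`. -/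
theorem IsHole.clone_aux {f' : ZMod k → V} (h : IsHole G f) (h' : IsHole G f')
    (hff : ∀ j, j ≠ 0 → f' j = f j) {p : V} (hp' : p ≠ f' 0)
    (hpv : G.Adj p (f 0)) (hpv' : ¬ G.Adj p (f' 0)) (hp1 : G.Adj p (f 1)) : False := by
  obtain ⟨n1, n2, n3, n4⟩ := zmod_ne h.1
  have e1 : f' 1 = f 1 := hff _ n1
  have e2 : f' 2 = f 2 := hff _ n2
  have e3 : f' 3 = f 3 := hff _ n3
  have em : f' (-1) = f (-1) := hff _ (neg_ne_zero.2 n1)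
  have hm : ¬ G.Adj p (f (-1)) := by
    intro hm
    exact no_C4 hC4 (a := f (-1)) (b := p) (c := f 1) (d := f' 0) hm.symm hp1
      (by rw [← e1]; exact (h'.adj_succ (by ring)).symm)
      (by rw [← em]; exact (h'.adj_succ (by ring)).symm) (h.not_adj_two (by ring)) hpv'
      (h.ne_two (by ring)) hp'
  have hp2 : G.Adj p (f 2) := by
    have := h.extend hbull (i := 0) hpv (by simpa using hp1)
    simpa [hm] using this
  have hp3 : G.Adj p (f 3) := by
    have := h'.extend hbull (u := p) (i := 1) (by rwa [e1])
      (by rw [show (1 : ZMod k) + 1 = 2 by ring, e2]; exact hp2)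
    rw [sub_self, show (1 : ZMod k) + 2 = 3 by ring, e3] at this
    exact this.resolve_left hpv'
  exact hm (h.center_of_four hC4 hbull (i := 0) hpv (by simpa using hp1) (by simpa using hp2)
    (by simpa using hp3) _)

/-- Two holes that differ in one vertex only: no outside vertex distinguishes these vertices. -/
theorem IsHole.clone_indist {f' : ZMod k → V} (h : IsHole G f) (h' : IsHole G f')
    (hff : ∀ j, j ≠ 0 → f' j = f j) (hne : f 0 ≠ f' 0) {p : V} (hp' : p ≠ f' 0)
    (hpf : p ≠ f 1) (hpv : G.Adj p (f 0)) : G.Adj p (f' 0) := by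
  obtain ⟨n1, n2, n3, n4⟩ := zmod_ne h.1
  by_contra hpv'
  have e1 : f' 1 = f 1 := hff _ n1
  have e2 : f' 2 = f 2 := hff _ n2
  have em : f' (-1) = f (-1) := hff _ (neg_ne_zero.2 n1)
  have hp1 : ¬ G.Adj p (f 1) := fun hp1 => h.clone_aux hC4 hbull h' hff hp' hpv hpv' hp1
  have hvv : G.Adj (f 0) (f' 0) := by
    by_contra hvv
    exact no_C4 hC4 (a := f (-1)) (b := f 0) (c := f 1) (d := f' 0) (h.adj_succ (by ring))
      (h.adj_succ (by ring)) (by rw [← e1]; exact (h'.adj_succ (by ring)).symm)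
      (by rw [← em]; exact (h'.adj_succ (by ring)).symm) (h.not_adj_two (by ring)) hvv
      (h.ne_two (by ring)) hne
  have hp2 : ¬ G.Adj p (f 2) := by
    intro hp2
    exact no_C4 hC4 (a := p) (b := f 0) (c := f 1) (d := f 2) hpv (h.adj_succ (by ring))
      (h.adj_succ (by ring)) hp2.symm hp1 (h.not_adj_two (by ring)) hpf
      (h.ne_two (by ring))
  exact no_bull hbull (a := f 0) (b := f 1) (c := f' 0) (d := p) (e := f 2)
    (h.adj_succ (by ring)) hvv (by rw [← e1]; exact (h'.adj_succ (by ring)).symm) hpv.symm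
    (h.adj_succ (by ring)) (h.not_adj_two (by ring)) (fun e => hp1 e.symm) (fun e => hpv' e.symm)
    (by rw [← e2]; exact h'.not_adj_two (by ring)) hp2

end Holes

/-! ### Homogeneous sets -/

section Homogeneous

variable {V : Type*} {G : SimpleGraph V}

/-- `X` is a homogeneous set of `G[s]`: a proper subset of `s` with at least two vertices such that
every vertex of `s` outside `X` is complete or anticomplete to `X`. -/
def Homog (G : SimpleGraph V) (s X : Finset V) : Prop :=
  X ⊆ s ∧ X ≠ s ∧ (∃ a ∈ X, ∃ b ∈ X, a ≠ b) ∧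
    ∀ v ∈ s, v ∉ X → ∀ x ∈ X, ∀ y ∈ X, G.Adj v x → G.Adj v y

/-- The spanning subgraph of `G` whose edges are the edges of `G` inside `D`; its reachability
relation describes the components of `G[D]`. -/
def within (G : SimpleGraph V) (D : Set V) : SimpleGraph V where
  Adj x y := G.Adj x y ∧ x ∈ D ∧ y ∈ D
  symm := ⟨fun _ _ h => ⟨h.1.symm, h.2.2, h.2.1⟩⟩
  loopless := ⟨fun _ h => h.1.ne rfl⟩

theorem mem_of_within_reachable {D : Set V} {a x : V} (ha : a ∈ D)
    (h : (within G D).Reachable a x) : x ∈ D := by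
  obtain ⟨p⟩ := h
  induction p with
  | nil => exact ha
  | cons h _ ih => exact ih h.2.2

/-- A property that distinguishes two vertices of a component distinguishes the ends of one of its
edges. -/
theorem exists_boundary_edge {H : SimpleGraph V} {a b : V} {P : V → Prop} (h : H.Reachable a b)
    (ha : P a) (hb : ¬ P b) :
    ∃ x y, H.Reachable a x ∧ H.Reachable a y ∧ H.Adj x y ∧ P x ∧ ¬ P y := by
  obtain ⟨p⟩ := h
  induction p with
  | nil => exact absurd ha hb
  | @cons u v w h p ih =>
    by_cases hv : P v
    · obtain ⟨x, y, hx, hy, hxy, hP⟩ := ih hv hb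
      exact ⟨x, y, h.reachable.trans hx, h.reachable.trans hy, hxy, hP⟩
    · exact ⟨u, v, SimpleGraph.Reachable.rfl, h.reachable, h, ha, hv⟩

variable {s : Finset V} (hs : ∀ X, ¬ Homog G s X)
  (hC4 : IsFree G (SimpleGraph.cycleGraph 4)) (hbull : IsFree G bull)
include hs hC4 hbull

/-- In a graph without homogeneous sets, no hole has a vertex complete to it. Otherwise, among the
common neighbours of all these vertices, the component containing the hole is homogeneous. -/
theorem IsHole.no_center {k : ℕ} {f : ZMod k → V} (h : IsHole G f) (hfs : ∀ j, f j ∈ s)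
    {z₀ : V} (hz₀s : z₀ ∈ s) (hz₀ : ∀ j, G.Adj z₀ (f j)) : False := by
  classical
  have : NeZero k := ⟨by have := h.1; omega⟩
  set D : Set V := {x | x ∈ s ∧ ∀ z ∈ s, (∀ j, G.Adj z (f j)) → G.Adj z x} with hD
  set X := s.filter (fun x => (within G D).Reachable (f 0) x) with hX
  have hfD : ∀ j, f j ∈ D := fun j => ⟨hfs j, fun z _ hz => hz j⟩
  have hfX : ∀ j, (within G D).Reachable (f 0) (f j) := by
    intro j
    by_contra hj
    obtain ⟨m, hm, hm'⟩ := exists_boundary (P := fun j => (within G D).Reachable (f 0) (f j))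
      (i := 0) SimpleGraph.Reachable.rfl hj
    exact hm' (hm.trans (SimpleGraph.Adj.reachable ⟨h.adj_succ rfl, hfD _, hfD _⟩))
  have hXD : ∀ {x}, (within G D).Reachable (f 0) x → x ∈ D :=
    fun hx => mem_of_within_reachable (hfD 0) hx
  have hXnc : ∀ {x}, x ∈ D → ¬ ∀ j, G.Adj x (f j) := fun hx hc =>
    (hx.2 _ hx.1 hc).ne rfl
  refine hs X ⟨Finset.filter_subset _ _, ?_, ⟨f 0, by simp [hX, hfs], f 1, ?_, ?_⟩, ?_⟩
  · intro e
    have hz : z₀ ∈ X := e ▸ hz₀s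
    exact hXnc (hXD (Finset.mem_filter.1 hz).2) hz₀
  · simp [hX, hfs, hfX]
  · exact (h.adj_succ (by ring)).ne
  intro v hvs hvX a ha b hb hva
  by_contra hvb
  simp only [hX, Finset.mem_filter, not_and] at ha hb hvX
  obtain ⟨x, y, hax, hay, hxy, hvx, hvy⟩ :=
    exists_boundary_edge (P := fun x => G.Adj v x) (ha.2.symm.trans hb.2) hva hvb
  have hx := ha.2.trans hax
  have hy := ha.2.trans hay
  -- Some `z` complete to the hole misses `v`, as otherwise `v` lies in the component.
  obtain ⟨z, hzs, hzC, hzv⟩ : ∃ z ∈ s, (∀ j, G.Adj z (f j)) ∧ ¬ G.Adj z v := by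
    by_contra! hcon
    exact hvX hvs (hx.trans (SimpleGraph.Adj.reachable ⟨hvx.symm, hXD hx, hvs, hcon⟩))
  have hzX : ∀ {x}, (within G D).Reachable (f 0) x → G.Adj z x := fun hx => (hXD hx).2 z hzs hzC
  have hvC : ∃ j, ¬ G.Adj v (f j) := by
    by_contra! hcon
    exact hvy ((hXD hy).2 v hvs hcon)
  have hvz : v ≠ z := by
    rintro rfl
    obtain ⟨j, hj⟩ := hvC
    exact hj (hzC j)
  -- The triangle `x y z` with pendants `v` at `x` and `u` at `z` would be a bull.
  have star : ∀ {x y u}, (within G D).Reachable (f 0) x → (within G D).Reachable (f 0) y →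
      (within G D).Reachable (f 0) u → G.Adj x y → G.Adj v x → ¬ G.Adj v y → ¬ G.Adj v u →
      ¬ G.Adj x u → ¬ G.Adj y u → False := by
    intro x y u hx hy hu hxy hvx hvy hvu hxu hyu
    exact no_bull hbull (a := x) (b := z) (c := y) (d := v) (e := u) (hzX hx).symm hxy (hzX hy)
      hvx.symm (hzX hu) hxu hzv (fun e => hvy e.symm) hyu hvu
  by_cases hvC' : ∃ i, G.Adj v (f i)
  · obtain ⟨i, hi⟩ := hvC'
    obtain ⟨j, hj⟩ := hvC
    obtain ⟨m, hm, hm'⟩ := exists_boundary (P := fun j => G.Adj v (f j)) hi hj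
    refine star (hfX m) (hfX (m + 1)) (hfX (m + 3)) (h.adj_succ rfl) hm hm' ?_
      (h.not_adj_three rfl) (h.not_adj_two (by ring))
    intro hm3
    exact no_C4 hC4 (a := v) (b := f m) (c := z) (d := f (m + 3)) hm (hzC _).symm (hzC _)
      hm3.symm (fun e => hzv e.symm) (h.not_adj_three rfl) hvz
      (ne_of_adj_not (h.adj_succ rfl) fun e => h.not_adj_two (i := m + 1) (by ring) e.symm)
  · push Not at hvC'
    by_cases hxC : ∃ j, G.Adj x (f j)
    · obtain ⟨i, hi⟩ := hxC
      have step : ∀ i, G.Adj x (f i) → ∀ j, ¬ G.Adj (f i) (f j) → G.Adj x (f j) := by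
        intro i hi j hij
        by_contra hj
        exact star hx (hfX i) (hfX j) hi hvx (hvC' i) (hvC' j) hj hij
      have hxC' : ¬ ∀ j, G.Adj x (f j) := hXnc (hXD hx)
      push Not at hxC'
      obtain ⟨j, hj⟩ := hxC'
      obtain ⟨m, hm, hm'⟩ := exists_boundary (P := fun j => G.Adj x (f j)) hi hj
      exact hm' (step _ (step m hm (m + 3) (h.not_adj_three rfl)) (m + 1)
        fun e => h.not_adj_two (i := m + 1) (by ring) e.symm)
    · push Not at hxC
      refine hXnc (hXD hy) fun j => ?_
      by_contra hj
      exact star hx hy (hfX j) hxy.1 hvx hvy (hvC' j) (hxC j) hj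

/-- In a graph without homogeneous sets, no vertex has three consecutive neighbours on a hole.
Otherwise the vertices that may replace the middle one form a homogeneous set. -/
theorem IsHole.no_clone {k : ℕ} {f : ZMod k → V} (h : IsHole G f) (hfs : ∀ j, f j ∈ s)
    {u : V} (hus : u ∈ s) (h0 : G.Adj u (f (-1))) (h1 : G.Adj u (f 0)) (h2 : G.Adj u (f 1)) :
    False := by
  classical
  obtain ⟨n1, n2, n3, n4⟩ := zmod_ne h.1
  set Q := s.filter (fun x => G.Adj x (f (-1)) ∧ G.Adj x (f 1) ∧
    ∀ j, G.Adj x (f j) → j = -1 ∨ j = 0 ∨ j = 1) with hQ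
  have huQ : u ∈ Q := by
    simp only [hQ, Finset.mem_filter]
    exact ⟨hus, h0, h2, fun j hj => h.clone_exact hC4 hbull
      (fun hc => h.no_center hs hC4 hbull hfs hus hc) h0 h1 h2 hj⟩
  have hfQ : f 0 ∈ Q := by
    simp only [hQ, Finset.mem_filter]
    refine ⟨hfs 0, (h.adj_succ (by ring)).symm, h.adj_succ (by ring), fun j hj => ?_⟩
    rcases (h.2 _ _).1 hj with e | e
    · right; right; linear_combination e
    · left; linear_combination -e
  have hupd : ∀ x ∈ Q, IsHole G (Function.update f 0 x) := by
    intro x hx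
    simp only [hQ, Finset.mem_filter] at hx
    obtain ⟨-, hxm, hx1, hx⟩ := hx
    have key : ∀ j, j ≠ 0 → (G.Adj x (f j) ↔ j = 0 + 1 ∨ 0 = j + 1) := by
      intro j hj
      constructor
      · intro hxj
        rcases hx j hxj with e | e | e
        · right; rw [e]; ring
        · exact absurd e hj
        · left; rw [e]; ring
      · rintro (e | e)
        · rw [e, zero_add]; exact hx1
        · rw [show j = -1 by linear_combination -e]; exact hxm
    refine ⟨h.1, fun i j => ?_⟩
    by_cases hi : i = 0 <;> by_cases hj : j = 0
    · subst hi hj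
      simpa using n1.symm
    · subst hi
      simpa [hj] using key j hj
    · subst hj
      rw [Function.update_self, Function.update_of_ne hi, SimpleGraph.adj_comm, key i hi]
      tauto
    · rw [Function.update_of_ne hi, Function.update_of_ne hj]
      exact h.2 i j
  refine hs Q ⟨Finset.filter_subset _ _, ?_, ⟨u, huQ, f 0, hfQ, h1.ne⟩, ?_⟩
  · intro e
    have : f 1 ∈ Q := e ▸ hfs 1
    simp [hQ] at this
  · intro p hp hpQ x hx y hy hpx
    by_cases hxy : x = y
    · exact hxy ▸ hpx
    by_cases hp1 : p = f 1
    · subst hp1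
      exact (Finset.mem_filter.1 hy).2.2.1.symm
    · have := (hupd x hx).clone_indist hC4 hbull (hupd y hy) (p := p)
        (fun j hj => by simp [hj]) (by simpa using hxy)
        (by rw [Function.update_self]; rintro rfl; exact hpQ hy)
        (by simpa [n1] using hp1) (by simpa using hpx)
      simpa using this

/-- In a graph without homogeneous sets, no edge of a hole lies in a triangle. -/
theorem IsHole.no_triangle {k : ℕ} {f : ZMod k → V} (h : IsHole G f) (hfs : ∀ j, f j ∈ s)
    {u : V} (hus : u ∈ s) {i : ZMod k} (h0 : G.Adj u (f i)) (h1 : G.Adj u (f (i + 1))) :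
    False := by
  rcases h.extend hbull h0 h1 with h2 | h2
  · refine (h.shift i).no_clone hs hC4 hbull (fun j => hfs _) hus ?_ ?_ ?_
    · convert h2 using 2; ring
    · convert h0 using 2; ring
    · convert h1 using 2; ring
  · refine (h.shift (i + 1)).no_clone hs hC4 hbull (fun j => hfs _) hus ?_ ?_ ?_
    · convert h0 using 2; ring
    · convert h1 using 2; ring
    · convert h2 using 2; ring

/-- In a graph without homogeneous sets, if `r t` is an edge in no triangle, then `t` is in no
triangle: a component of the neighbourhood of `t` containing an edge would be homogeneous. -/
theorem no_triangle_of_edge {r t a b : V} (hts : t ∈ s) (has : a ∈ s) (hbs : b ∈ s)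
    (hrt : G.Adj r t) (hno : ∀ u ∈ s, G.Adj u r → G.Adj u t → False)
    (hta : G.Adj t a) (htb : G.Adj t b) (hab : G.Adj a b) : False := by
  classical
  set D : Set V := {x | x ∈ s ∧ G.Adj t x} with hD
  set W := s.filter (fun x => (within G D).Reachable a x) with hW
  have haD : a ∈ D := ⟨has, hta⟩
  have hWD : ∀ {x}, (within G D).Reachable a x → x ∈ D := fun hx => mem_of_within_reachable haD hx
  refine hs W ⟨Finset.filter_subset _ _, ?_, ⟨a, by simp [hW, has], b, ?_, hab.ne⟩, ?_⟩
  · intro e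
    have htW : t ∈ W := e ▸ hts
    exact (hWD (Finset.mem_filter.1 htW).2).2.ne rfl
  · simp only [hW, Finset.mem_filter]
    exact ⟨hbs, SimpleGraph.Adj.reachable ⟨hab, haD, hbs, htb⟩⟩
  intro p hps hpW x hx y hy hpx
  by_contra hpy
  simp only [hW, Finset.mem_filter, not_and] at hx hy hpW
  by_cases hpt : G.Adj t p
  · exact hpW hps (hx.2.trans (SimpleGraph.Adj.reachable ⟨hpx.symm, hWD hx.2, hps, hpt⟩))
  have hpt' : p ≠ t := by
    rintro rfl
    exact hpy (hWD hy.2).2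
  obtain ⟨c, d, hc, hd, hcd, hpc, hpd⟩ :=
    exists_boundary_edge (P := fun x => G.Adj p x) (hx.2.symm.trans hy.2) hpx hpy
  have hc' := hWD (hx.2.trans hc)
  have hd' := hWD (hx.2.trans hd)
  have hcr : ¬ G.Adj c r := fun e => hno c hc'.1 e hc'.2.symm
  have hdr : ¬ G.Adj d r := fun e => hno d hd'.1 e hd'.2.symm
  have hpr : ¬ G.Adj p r := by
    intro hpr
    exact no_C4 hC4 (a := p) (b := c) (c := t) (d := r) hpc hc'.2.symm hrt.symm hpr.symm
      (fun e => hpt e.symm) hcr hpt' (ne_of_adj_not hcd.1 fun e => hdr e.symm)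
  exact no_bull hbull (a := t) (b := c) (c := d) (d := r) (e := p) hc'.2 hd'.2 hcd.1 hrt.symm
    hpc.symm hpt hcr hdr (fun e => hpd e.symm) fun e => hpr e.symm

/-- A graph without homogeneous sets that has a triangle has no hole. -/
theorem no_hole_of_triangle {a b c : V} (has : a ∈ s) (hbs : b ∈ s) (hcs : c ∈ s)
    (hab : G.Adj a b) (hac : G.Adj a c) (hbc : G.Adj b c) {k : ℕ} {f : ZMod k → V}
    (h : IsHole G f) (hfs : ∀ j, f j ∈ s) : False := by
  classical
  set T := s.filter (fun t => ∃ x ∈ s, ∃ y ∈ s, G.Adj t x ∧ G.Adj t y ∧ G.Adj x y) with hT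
  have haT : a ∈ T := by
    simp only [hT, Finset.mem_filter]
    exact ⟨has, b, hbs, c, hcs, hab, hac, hbc⟩
  have hbT : b ∈ T := by
    simp only [hT, Finset.mem_filter]
    exact ⟨hbs, a, has, c, hcs, hab.symm, hbc, hac⟩
  have hno : ∀ r ∈ s, ∀ t ∈ T, G.Adj r t → ∃ u ∈ s, G.Adj u r ∧ G.Adj u t := by
    intro r hr t ht hrt
    by_contra! hcon
    obtain ⟨hts, x, hx, y, hy, htx, hty, hxy⟩ := Finset.mem_filter.1 ht
    exact no_triangle_of_edge hs hC4 hbull hts hx hy hrt hcon htx hty hxy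
  have hTs : T = s := by
    by_contra hne
    refine hs T ⟨Finset.filter_subset _ _, hne, ⟨a, haT, b, hbT, hab.ne⟩, ?_⟩
    intro v hv hvT x hx y hy hvx
    obtain ⟨u, hu, huv, hux⟩ := hno v hv x hx hvx
    exact absurd (Finset.mem_filter.2
      ⟨hv, u, hu, x, (Finset.mem_filter.1 hx).1, huv.symm, hvx, hux⟩) hvT
  obtain ⟨u, hu, hu0, hu1⟩ := hno (f 0) (hfs 0) (f (0 + 1)) (by rw [hTs]; exact hfs _)
    (h.adj_succ rfl)
  exact h.no_triangle hs hC4 hbull hfs hu hu0 hu1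

end Homogeneous

/-! ### Hole-free graphs without `C₄` are perfect -/

section Chordal

variable {V : Type*} {G : SimpleGraph V}

/-- Two nonadjacent neighbours of `v`, joined by a path avoiding `v` and its other neighbours,
lie with `v` on a hole: take a shortest such path and close it up through `v`. -/
theorem exists_hole (hC4 : IsFree G (SimpleGraph.cycleGraph 4)) {v s₁ s₂ y₁ y₂ : V} {M : Set V}
    (h₁ : G.Adj v s₁) (h₂ : G.Adj v s₂) (hn : ¬ G.Adj s₁ s₂) (hne : s₁ ≠ s₂)
    (hM : ∀ m ∈ M, m ≠ v ∧ ¬ G.Adj v m) (hy₁ : y₁ ∈ M) (hs₁ : G.Adj s₁ y₁) (hs₂ : G.Adj s₂ y₂)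
    (hr : (within G M).Reachable y₁ y₂) :
    ∃ (k : ℕ) (f : ZMod k → V), IsHole G f ∧ ∀ j, f j ∈ M ∪ {v, s₁, s₂} := by
  set D : Set V := M ∪ {s₁, s₂} with hD
  have hs₁D : s₁ ∈ D := by simp [hD]
  have hs₂D : s₂ ∈ D := by simp [hD]
  have hMD : M ⊆ D := Set.subset_union_left
  have hy₂ : y₂ ∈ M := mem_of_within_reachable hy₁ hr
  have hle : within G M ≤ within G D := fun a b h => ⟨h.1, hMD h.2.1, hMD h.2.2⟩
  have e₁ : (within G D).Adj s₁ y₁ := ⟨hs₁, hs₁D, hMD hy₁⟩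
  have e₂ : (within G D).Adj y₂ s₂ := ⟨hs₂.symm, hMD hy₂, hs₂D⟩
  have hreach : (within G D).Reachable s₁ s₂ :=
    e₁.reachable.trans ((hr.mono hle).trans e₂.reachable)
  obtain ⟨p, hp⟩ := hreach.exists_walk_length_eq_dist
  have hpath := p.isPath_of_length_eq_dist hp
  set n := p.length with hnl
  set P : ℕ → V := p.getVert with hPdef
  have hP0 : P 0 = s₁ := p.getVert_zero
  have hPn : P n = s₂ := p.getVert_length
  have hinj : ∀ i ≤ n, ∀ j ≤ n, P i = P j → i = j :=
    fun i hi j hj e => hpath.getVert_injOn hi hj e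
  have hPD : ∀ i, P i ∈ D := fun i => mem_of_within_reachable hs₁D (p.take i).reachable
  have hadj : ∀ i < n, G.Adj (P i) (P (i + 1)) := fun i hi => (p.adj_getVert_succ hi).1
  have hchord : ∀ i j, i < j → j ≤ n → G.Adj (P i) (P j) → j = i + 1 := by
    intro i j hij hj h
    have h' : (within G D).Adj (P i) (P j) := ⟨h, hPD i, hPD j⟩
    have := SimpleGraph.dist_le ((p.take i).append (SimpleGraph.Walk.cons h' (p.drop j)))
    simp [SimpleGraph.Walk.length_append] at this
    omega
  have hPM : ∀ i, 0 < i → i < n → P i ∈ M := by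
    intro i hi hin
    rcases hPD i with h | h | h
    · exact h
    · have := hinj i hin.le 0 (by omega) (h.trans hP0.symm)
      omega
    · have := hinj i hin.le n le_rfl (Eq.trans h hPn.symm)
      omega
  have hvP : ∀ i ≤ n, G.Adj v (P i) → i = 0 ∨ i = n := by
    intro i hi h
    by_contra! hcon
    exact (hM _ (hPM i (by omega) (by omega))).2 h
  have hn0 : n ≠ 0 := by
    intro e
    rw [e] at hPn
    exact hne (hP0.symm.trans hPn)
  have hn1 : n ≠ 1 := by
    intro e
    have := hadj 0 (by omega)
    rw [hP0, zero_add, ← e, hPn] at this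
    exact hn this
  have hn2 : n ≠ 2 := by
    intro e
    have a1 := hadj 0 (by omega)
    have a2 := hadj 1 (by omega)
    have a3 := hM _ (hPM 1 (by omega) (by omega))
    rw [hP0, zero_add] at a1
    rw [show 1 + 1 = n by omega, hPn] at a2
    exact no_C4 hC4 h₁ a1 a2 h₂.symm a3.2 hn a3.1.symm hne
  set g : ℕ → V := fun a => if a ≤ n then P a else v with hg
  have hlt : ∀ a b, a < b → b ≤ n + 1 → (G.Adj (g a) (g b) ↔ b = a + 1 ∨ b = n + 1 ∧ a = 0) := by
    intro a b hab hb
    by_cases hbn : b ≤ n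
    · rw [show g a = P a from if_pos (by omega), show g b = P b from if_pos hbn]
      constructor
      · exact fun h => Or.inl (hchord a b hab hbn h)
      · rintro (rfl | h)
        · exact hadj a (by omega)
        · omega
    · rw [show g a = P a from if_pos (by omega), show g b = v from if_neg hbn]
      constructor
      · intro h
        have := hvP a (by omega) h.symm
        omega
      · intro h
        have : a = 0 ∨ a = n := by omega
        rcases this with rfl | rfl
        · rw [hP0]; exact h₁.symm
        · rw [hPn]; exact h₂.symm
  refine ⟨n + 2, fun i => g i.val, ⟨by omega, fun i j => ?_⟩, fun j => ?_⟩
  · have hsucc : ∀ i j : ZMod (n + 2),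
        j = i + 1 ↔ j.val = i.val + 1 ∨ i.val = n + 1 ∧ j.val = 0 := by
      intro i j
      have hi := i.val_lt
      have hj := j.val_lt
      rw [← (ZMod.val_injective (n + 2)).eq_iff, ZMod.val_add, ZMod.val_one_eq_one_mod,
        Nat.mod_eq_of_lt (show 1 < n + 2 by omega)]
      by_cases h : i.val + 1 < n + 2
      · rw [Nat.mod_eq_of_lt h]; omega
      · rw [show i.val + 1 = n + 2 by omega, Nat.mod_self]; omega
    have hi := i.val_lt
    have hj := j.val_lt
    rw [hsucc i j, hsucc j i]
    rcases lt_trichotomy i.val j.val with h | h | h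
    · rw [hlt _ _ h (by omega)]; omega
    · refine ⟨fun e => absurd (congrArg g h) e.ne, fun e => ?_⟩
      omega
    · rw [SimpleGraph.adj_comm, hlt _ _ h (by omega)]; omega
  · change (if j.val ≤ n then P j.val else v) ∈ _
    split_ifs
    · rcases hPD j.val with h | h | h
      · exact Or.inl h
      · exact Or.inr (Or.inr (Or.inl h))
      · exact Or.inr (Or.inr (Or.inr h))
    · simp

/-- Dirac's lemma: in a chordal graph, every vertex that is not universal has a simplicial
nonneighbour. -/
theorem exists_simplicial (hC4 : IsFree G (SimpleGraph.cycleGraph 4)) {s : Finset V}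
    (hno : ∀ (k : ℕ) (f : ZMod k → V), IsHole G f → ¬ ∀ j, f j ∈ s) (t : Finset V) :
    t ⊆ s → ∀ v ∈ t, ∀ b ∈ t, b ≠ v → ¬ G.Adj v b →
      ∃ u ∈ t, u ≠ v ∧ ¬ G.Adj v u ∧
        ∀ x ∈ t, ∀ y ∈ t, G.Adj u x → G.Adj u y → x ≠ y → G.Adj x y := by
  classical
  induction t using Finset.strongInduction with
  | H t ih =>
  intro hts v hv b hb hbv hvb
  set M : Set V := {x | x ∈ t ∧ x ≠ v ∧ ¬ G.Adj v x} with hM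
  have hbM : b ∈ M := ⟨hb, hbv, hvb⟩
  set B := t.filter (fun x => (within G M).Reachable b x) with hB
  have hBM : ∀ x ∈ B, x ∈ M := fun x hx =>
    mem_of_within_reachable hbM (Finset.mem_filter.1 hx).2
  have hbB : b ∈ B := by simp [hB, hb]
  set S := t.filter (fun x => G.Adj v x ∧ ∃ y ∈ B, G.Adj x y) with hS
  have hScl : ∀ x ∈ S, ∀ y ∈ S, x ≠ y → G.Adj x y := by
    intro x hx y hy hxy
    by_contra hn
    obtain ⟨hxt, hvx, x', hx', hxx'⟩ := Finset.mem_filter.1 hx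
    obtain ⟨hyt, hvy, y', hy', hyy'⟩ := Finset.mem_filter.1 hy
    obtain ⟨k, f, hf, hfm⟩ := exists_hole hC4 hvx hvy hn hxy (fun m hm => hm.2) (hBM x' hx')
      hxx' hyy' ((Finset.mem_filter.1 hx').2.symm.trans (Finset.mem_filter.1 hy').2)
    refine hno k f hf fun j => hts ?_
    rcases hfm j with h | h | h | h
    · exact h.1
    · exact h ▸ hv
    · exact h ▸ hxt
    · exact Set.mem_singleton_iff.1 h ▸ hyt
  have hsub : B ∪ S ⊂ t := by
    refine (Finset.ssubset_iff_of_subset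
      (Finset.union_subset (Finset.filter_subset _ _) (Finset.filter_subset _ _))).2 ⟨v, hv, ?_⟩
    intro h
    rcases Finset.mem_union.1 h with h | h
    · exact (hBM v h).2.1 rfl
    · exact (Finset.mem_filter.1 h).2.1.ne rfl
  -- All neighbours in `t` of a vertex of `B` lie in `B ∪ S`.
  have hnb : ∀ u ∈ B, ∀ x ∈ t, G.Adj u x → x ∈ B ∪ S := by
    intro u hu x hx hux
    have huM := hBM u hu
    by_cases hvx : G.Adj v x
    · exact Finset.mem_union_right _ (Finset.mem_filter.2 ⟨hx, hvx, u, hu, hux.symm⟩)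
    · have hxv : x ≠ v := by
        rintro rfl
        exact huM.2.2 hux.symm
      exact Finset.mem_union_left _ (Finset.mem_filter.2 ⟨hx, (Finset.mem_filter.1 hu).2.trans
        (SimpleGraph.Adj.reachable ⟨hux, huM, hx, hxv, hvx⟩)⟩)
  suffices h : ∃ u ∈ B, ∀ x ∈ B ∪ S, ∀ y ∈ B ∪ S, G.Adj u x → G.Adj u y → x ≠ y → G.Adj x y by
    obtain ⟨u, hu, h⟩ := h
    exact ⟨u, (hBM u hu).1, (hBM u hu).2.1, (hBM u hu).2.2, fun x hx y hy hux huy hxy =>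
      h x (hnb u hu x hx hux) y (hnb u hu y hy huy) hux huy hxy⟩
  by_cases hA : ∃ x ∈ S, ∃ c ∈ B ∪ S, c ≠ x ∧ ¬ G.Adj x c
  · obtain ⟨x, hx, c, hc, hcx, hxc⟩ := hA
    obtain ⟨u, hu, hux, hxu, hsimp⟩ := ih _ hsub (hsub.1.trans hts) x
      (Finset.mem_union_right _ hx) c hc hcx hxc
    rcases Finset.mem_union.1 hu with hu | hu
    · exact ⟨u, hu, hsimp⟩
    · exact absurd (hScl x hx u hu hux.symm) hxu
  push Not at hA
  by_cases hA' : ∃ x ∈ B, ∃ c ∈ B ∪ S, c ≠ x ∧ ¬ G.Adj x c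
  · obtain ⟨x, hx, c, hc, hcx, hxc⟩ := hA'
    obtain ⟨u, hu, hux, hxu, hsimp⟩ := ih _ hsub (hsub.1.trans hts) x
      (Finset.mem_union_left _ hx) c hc hcx hxc
    rcases Finset.mem_union.1 hu with hu | hu
    · exact ⟨u, hu, hsimp⟩
    · exact absurd (hA u hu x (Finset.mem_union_left _ hx) hux.symm).symm hxu
  push Not at hA'
  refine ⟨b, hbB, fun x hx y hy _ _ hxy => ?_⟩
  rcases Finset.mem_union.1 hx with h | h
  · exact hA' x h y hy hxy.symm
  · exact hA x h y hy hxy.symm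

theorem perf_of_no_hole [DecidableEq V] (hC4 : IsFree G (SimpleGraph.cycleGraph 4)) {s : Finset V}
    (hno : ∀ (k : ℕ) (f : ZMod k → V), IsHole G f → ¬ ∀ j, f j ∈ s) : Perf G s := by
  refine perf_of_simplicial fun t ht ⟨v, hv⟩ => ?_
  by_cases h : ∀ x ∈ t, ∀ y ∈ t, x ≠ y → G.Adj x y
  · exact ⟨v, hv, fun x hx y hy _ _ hxy => h x hx y hy hxy⟩
  · push Not at h
    obtain ⟨x, hx, y, hy, hxy, hn⟩ := h
    obtain ⟨u, hu, -, -, hs⟩ := exists_simplicial hC4 hno t ht x hx y hy hxy.symm hn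
    exact ⟨u, hu, hs⟩

end Chordal

/-! ### Weighted divisions -/

section Division

variable {V : Type*} [DecidableEq V] {G : SimpleGraph V}

/-- The induction proving the theorem. Positive vertex weights are carried along so that a
homogeneous set can be contracted to a vertex weighing as much as its heaviest clique. -/
theorem exists_division (hC4 : IsFree G (SimpleGraph.cycleGraph 4)) (hbull : IsFree G bull)
    (h3 : ∀ s : Finset V, (∀ a ∈ s, ∀ b ∈ s, ∀ c ∈ s, G.Adj a b → G.Adj a c → ¬ G.Adj b c) →
      ∃ c : V → Fin 3, ∀ u ∈ s, ∀ v ∈ s, G.Adj u v → c u ≠ c v) (s : Finset V) :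
    s.Nonempty → ∀ w : V → ℕ, (∀ v, 0 < w v) →
      ∃ P W : Finset V, P ∪ W = s ∧ Disjoint P W ∧ Perf G P ∧
        ∀ L ⊆ W, G.IsClique (L : Set V) →
          ∃ K ⊆ s, G.IsClique (K : Set V) ∧ ∑ v ∈ L, w v < ∑ v ∈ K, w v := by
  classical
  induction s using Finset.strongInduction with
  | H s ih =>
  rintro ⟨v₀, hv₀⟩ w hw
  have hempty : ∃ K ⊆ s, G.IsClique (K : Set V) ∧ ∑ v ∈ (∅ : Finset V), w v < ∑ v ∈ K, w v :=
    ⟨{v₀}, by simpa using hv₀, by simp, by simpa using hw v₀⟩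
  by_cases hs : ∃ X, Homog G s X
  · obtain ⟨X, hXs, hXne, ⟨x₀, hx₀, x₁, hx₁, hx₀₁⟩, hX⟩ := hs
    obtain ⟨KX, hKX, hKXc, hKXmax⟩ := exists_max_clique (G := G) w X
    set s' := insert x₀ (s \ X) with hs'
    have hs's : s' ⊂ s := by
      refine (Finset.ssubset_iff_of_subset ?_).2 ⟨x₁, hXs hx₁, by simp [hs', hx₁, hx₀₁.symm]⟩
      intro v hv
      rcases Finset.mem_insert.1 hv with rfl | h
      exacts [hXs hx₀, (Finset.mem_sdiff.1 h).1]
    have hs'X : ∀ v ∈ s', v ∈ X → v = x₀ := by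
      intro v hv hvX
      rcases Finset.mem_insert.1 hv with rfl | h
      exacts [rfl, absurd hvX (Finset.mem_sdiff.1 h).2]
    set w' := Function.update w x₀ (∑ v ∈ KX, w v) with hw'
    have hw'0 : w' x₀ = ∑ v ∈ KX, w v := by simp [hw']
    have hw'1 : ∀ T : Finset V, x₀ ∉ T → ∑ v ∈ T, w' v = ∑ v ∈ T, w v := by
      intro T hT
      refine Finset.sum_congr rfl fun v hv => Function.update_of_ne ?_ _ _
      rintro rfl
      exact hT hv
    have hw'pos : ∀ v, 0 < w' v := by
      intro v
      by_cases h : v = x₀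
      · subst h
        rw [hw'0]
        have := hKXmax {v} (by simpa using hx₀) (by simp)
        rw [Finset.sum_singleton] at this
        exact lt_of_lt_of_le (hw v) this
      · simpa [hw', h] using hw v
    have hsplit : ∀ T : Finset V, ∑ v ∈ T, w v = ∑ v ∈ T \ X, w v + ∑ v ∈ T ∩ X, w v := by
      intro T
      rw [add_comm]
      exact (Finset.sum_inter_add_sum_sdiff T X w).symm
    -- Cliques of the contracted graph expand to cliques of the same weight.
    have hup : ∀ K ⊆ s', G.IsClique (K : Set V) →
        ∃ K' ⊆ s, G.IsClique (K' : Set V) ∧ ∑ v ∈ K', w v = ∑ v ∈ K, w' v := by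
      intro K hK hKc
      by_cases hx : x₀ ∈ K
      · refine ⟨K \ X ∪ KX, Finset.union_subset (Finset.sdiff_subset.trans (hK.trans hs's.1))
          (hKX.trans hXs), isClique_replace hX (hK.trans hs's.1) hKc
          ⟨x₀, Finset.mem_inter.2 ⟨hx, hx₀⟩⟩ hKX hKXc, ?_⟩
        have e : K.erase x₀ = K \ X := by
          ext v
          simp only [Finset.mem_erase, Finset.mem_sdiff]
          constructor
          · exact fun h => ⟨h.2, fun hvX => h.1 (hs'X v (hK h.2) hvX)⟩
          · rintro ⟨h1, h2⟩
            refine ⟨?_, h1⟩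
            rintro rfl
            exact h2 hx₀
        rw [Finset.sum_union (Finset.disjoint_left.2 fun v hv hvK =>
          (Finset.mem_sdiff.1 hv).2 (hKX hvK)), ← Finset.sum_erase_add K w' hx, hw'0,
          hw'1 _ (by simp), e]
      · exact ⟨K, hK.trans hs's.1, hKc, (hw'1 K hx).symm⟩
    obtain ⟨P, W, hPW, hdisj, hP, hWlt⟩ := ih s' hs's ⟨x₀, by simp [hs']⟩ w' hw'pos
    have hPs' : P ⊆ s' := hPW ▸ Finset.subset_union_left
    have hWs' : W ⊆ s' := hPW ▸ Finset.subset_union_right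
    have hWlt' : ∀ L ⊆ W, G.IsClique (L : Set V) →
        ∃ K ⊆ s, G.IsClique (K : Set V) ∧ ∑ v ∈ L, w' v < ∑ v ∈ K, w v := by
      intro L hL hLc
      obtain ⟨K, hK, hKc, hlt⟩ := hWlt L hL hLc
      obtain ⟨K', hK', hKc', he⟩ := hup K hK hKc
      exact ⟨K', hK', hKc', he ▸ hlt⟩
    have hx₀s' : x₀ ∈ P ∪ W := by rw [hPW]; simp [hs']
    have hs_eq : s = s \ X ∪ X := (Finset.sdiff_union_of_subset hXs).symm
    rcases Finset.mem_union.1 hx₀s' with hx₀P | hx₀W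
    · obtain ⟨PX, WX, hPWX, hdisjX, hPX, hWXlt⟩ := ih X (hXs.ssubset_of_ne hXne) ⟨x₀, hx₀⟩ w hw
      have hPXX : PX ⊆ X := hPWX ▸ Finset.subset_union_left
      have hWXX : WX ⊆ X := hPWX ▸ Finset.subset_union_right
      have hx₀W : x₀ ∉ W := Finset.disjoint_left.1 hdisj hx₀P
      have hPX' : P ∩ X = {x₀} := by
        ext v
        simp only [Finset.mem_inter, Finset.mem_singleton]
        refine ⟨fun h => hs'X v (hPs' h.1) h.2, ?_⟩
        rintro rfl
        exact ⟨hx₀P, hx₀⟩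
      have hWX : ∀ v ∈ W, v ∉ X := by
        intro v hv hvX
        exact hx₀W (hs'X v (hWs' hv) hvX ▸ hv)
      refine ⟨P.erase x₀ ∪ PX, W ∪ WX, ?_, ?_,
        Perf.substitute hX hXs hx₀ (hPs'.trans hs's.1) hPX' hPXX hP hPX, ?_⟩
      · have e : P.erase x₀ ∪ W = s \ X := by
          rw [← Finset.erase_eq_of_notMem hx₀W, ← Finset.erase_union_distrib, hPW, hs',
            Finset.erase_insert (by simp [hx₀])]
        rw [Finset.union_union_union_comm, e, hPWX, ← hs_eq]
      · simp only [Finset.disjoint_union_left, Finset.disjoint_union_right]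
        refine ⟨⟨hdisj.mono_left (Finset.erase_subset _ _), ?_⟩, ?_, hdisjX⟩
        · exact Finset.disjoint_left.2 fun v hv hvW => hWX v hvW (hPXX hv)
        · refine Finset.disjoint_left.2 fun v hv hvW => ?_
          exact Finset.ne_of_mem_erase hv
            (hs'X v (hPs' (Finset.mem_of_mem_erase hv)) (hWXX hvW))
      · intro L hL hLc
        have hLs : L ⊆ s := hL.trans (Finset.union_subset (hWs'.trans hs's.1) (hWXX.trans hXs))
        have hLW : ∀ v ∈ L, v ∉ X → v ∈ W := by
          intro v hv hvX
          rcases Finset.mem_union.1 (hL hv) with h | h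
          exacts [h, absurd (hWXX h) hvX]
        rcases (L ∩ X).eq_empty_or_nonempty with hemp | hne
        · have hLX : ∀ v ∈ L, v ∉ X := fun v hv hvX => by
            have := Finset.mem_inter.2 ⟨hv, hvX⟩
            simp [hemp] at this
          obtain ⟨K, hK, hKc, hlt⟩ := hWlt' L (fun v hv => hLW v hv (hLX v hv)) hLc
          exact ⟨K, hK, hKc, hw'1 L (fun h => hLX _ h hx₀) ▸ hlt⟩
        · obtain ⟨K, hK, hKc, hlt⟩ := hWXlt (L ∩ X) (by
            intro v hv
            obtain ⟨hv, hvX⟩ := Finset.mem_inter.1 hv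
            rcases Finset.mem_union.1 (hL hv) with h | h
            exacts [absurd hvX (hWX v h), h]) (hLc.subset (by simp))
          refine ⟨L \ X ∪ K, Finset.union_subset (Finset.sdiff_subset.trans hLs) (hK.trans hXs),
            isClique_replace hX hLs hLc hne hK hKc, ?_⟩
          rw [Finset.sum_union (Finset.disjoint_left.2 fun v hv hvK =>
            (Finset.mem_sdiff.1 hv).2 (hK hvK)), hsplit L]
          omega
    · have hx₀P : x₀ ∉ P := fun h => Finset.disjoint_left.1 hdisj h hx₀W
      refine ⟨P, W ∪ X, ?_, ?_, hP, ?_⟩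
      · rw [← Finset.union_assoc, hPW, hs', Finset.insert_union, ← hs_eq,
          Finset.insert_eq_of_mem (hXs hx₀)]
      · rw [Finset.disjoint_union_right]
        refine ⟨hdisj, Finset.disjoint_left.2 fun v hv hvX => ?_⟩
        exact hx₀P (hs'X v (hPs' hv) hvX ▸ hv)
      · intro L hL hLc
        have hLs : L ⊆ s := hL.trans (Finset.union_subset (hWs'.trans hs's.1) hXs)
        have hLW : L \ X ⊆ W := by
          intro v hv
          obtain ⟨hv, hvX⟩ := Finset.mem_sdiff.1 hv
          rcases Finset.mem_union.1 (hL hv) with h | h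
          exacts [h, absurd h hvX]
        have hxL : x₀ ∉ L \ X := by simp [hx₀]
        rcases (L ∩ X).eq_empty_or_nonempty with hemp | hne
        · obtain ⟨K, hK, hKc, hlt⟩ := hWlt' (L \ X) hLW (hLc.subset (by simp))
          refine ⟨K, hK, hKc, ?_⟩
          rw [hw'1 _ hxL] at hlt
          rw [hsplit L, hemp]
          simpa using hlt
        · obtain ⟨K, hK, hKc, hlt⟩ := hWlt' (L \ X ∪ {x₀})
            (Finset.union_subset hLW (by simpa using hx₀W))
            (isClique_replace hX hLs hLc hne (by simpa using hx₀) (by simp))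
          refine ⟨K, hK, hKc, ?_⟩
          rw [Finset.sum_union (by simp [hx₀]), Finset.sum_singleton, hw'0,
            hw'1 _ hxL] at hlt
          have := hKXmax (L ∩ X) Finset.inter_subset_right (hLc.subset (by simp))
          rw [hsplit L]
          omega
  push Not at hs
  by_cases htri : ∃ a ∈ s, ∃ b ∈ s, ∃ c ∈ s, G.Adj a b ∧ G.Adj a c ∧ G.Adj b c
  · obtain ⟨a, ha, b, hb, c, hc, hab, hac, hbc⟩ := htri
    refine ⟨s, ∅, by simp, by simp, perf_of_no_hole hC4 fun k f hf hfs =>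
      no_hole_of_triangle hs hC4 hbull ha hb hc hab hac hbc hf hfs, fun L hL _ => ?_⟩
    rw [Finset.subset_empty.1 hL]
    exact hempty
  push Not at htri
  obtain ⟨c, hc⟩ := h3 s htri
  -- `W` is one colour class without its isolated vertices, so the rest is bipartite.
  set W := s.filter (fun x => c x = 2 ∧ ∃ y ∈ s, G.Adj x y) with hW
  refine ⟨s \ W, W, Finset.sdiff_union_of_subset (Finset.filter_subset _ _),
    Finset.sdiff_disjoint, perf_of_two_coloring (fun v => c v = 0) ?_, fun L hL hLc => ?_⟩
  · intro u hu v hv huv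
    obtain ⟨hu, huW⟩ := Finset.mem_sdiff.1 hu
    obtain ⟨hv, hvW⟩ := Finset.mem_sdiff.1 hv
    have h1 : c u ≠ 2 := fun h => huW (Finset.mem_filter.2 ⟨hu, h, v, hv, huv⟩)
    have h2 : c v ≠ 2 := fun h => hvW (Finset.mem_filter.2 ⟨hv, h, u, hu, huv.symm⟩)
    have h3 := hc u hu v hv huv
    generalize c u = i at *
    generalize c v = j at *
    fin_cases i <;> fin_cases j <;> simp_all
  · rcases L.eq_empty_or_nonempty with rfl | ⟨x, hx⟩
    · exact hempty
    obtain ⟨hxs, hcx, y, hy, hxy⟩ := Finset.mem_filter.1 (hL hx)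
    have hLx : L = {x} := by
      refine Finset.eq_singleton_iff_unique_mem.2 ⟨hx, fun z hz => ?_⟩
      by_contra hzx
      obtain ⟨hzs, hcz, -⟩ := Finset.mem_filter.1 (hL hz)
      exact hc z hzs x hxs (hLc hz hx hzx) (hcz.trans hcx.symm)
    refine ⟨{x, y}, ?_, ?_, ?_⟩
    · intro z hz
      rcases Finset.mem_insert.1 hz with rfl | h
      exacts [hxs, Finset.mem_singleton.1 h ▸ hy]
    · simp [SimpleGraph.isClique_iff, hxy]
    · rw [hLx, Finset.sum_pair hxy.ne, Finset.sum_singleton]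
      have := hw y
      omega

end Division

/-! ### From finsets to the stated notions -/

section Conversion

variable {V : Type*} {G : SimpleGraph V}

theorem bddAbove_cliqueNumOn [Fintype V] (s : Set V) :
    BddAbove {n | ∃ t : Finset V, ↑t ⊆ s ∧ G.IsNClique n t} :=
  ⟨Fintype.card V, fun _ ⟨t, _, ht⟩ => ht.card_eq ▸ Finset.card_le_univ t⟩

theorem card_le_cliqueNumOn [Fintype V] {s : Set V} {K : Finset V} (hK : (K : Set V) ⊆ s)
    (hKc : G.IsClique (K : Set V)) : K.card ≤ cliqueNumOn G s :=
  le_csSup (bddAbove_cliqueNumOn s) ⟨K, hK, hKc, rfl⟩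

theorem exists_clique_card_eq [Fintype V] (s : Set V) :
    ∃ K : Finset V, (K : Set V) ⊆ s ∧ G.IsClique (K : Set V) ∧ K.card = cliqueNumOn G s := by
  obtain ⟨K, hK, hKc⟩ := Nat.sSup_mem
    (s := {n | ∃ t : Finset V, ↑t ⊆ s ∧ G.IsNClique n t}) ⟨0, ∅, by simp, by simp⟩
    (bddAbove_cliqueNumOn s)
  exact ⟨K, hK, hKc.isClique, hKc.card_eq⟩

/-- The finset version of perfection implies the chromatic one: the colouring bounds `χ` from
above by `ω`, and a largest clique bounds it from below. -/
theorem Perf.isPerfect {P : Finset V} (hP : Perf G P) :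
    IsPerfect (G.induce (P : Set V)) := by
  classical
  intro s
  set H := G.induce (P : Set V) with hH
  apply le_antisymm
  · set t : Finset V := P.filter (fun v => ∃ h : v ∈ (P : Set V), (⟨v, h⟩ : (P : Set V)) ∈ s)
      with ht
    obtain ⟨col, hlt, hcol⟩ := hP t (Finset.filter_subset _ _) (cliqueNumOn H s) (by
      intro K hK hKc
      have hcard : (K.subtype (· ∈ (P : Set V))).card = K.card := by
        rw [Finset.card_subtype, Finset.filter_true_of_mem]
        exact fun v hv => (Finset.mem_filter.1 (hK hv)).1
      rw [← hcard]
      refine card_le_cliqueNumOn (G := H) ?_ ?_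
      · intro v hv
        exact (Finset.mem_filter.1 (hK (Finset.mem_subtype.1 hv))).2.2
      · intro x hx y hy hxy
        exact hKc (Finset.mem_subtype.1 hx) (Finset.mem_subtype.1 hy)
          fun e => hxy (Subtype.ext e))
    have hmem : ∀ v : s, (v : (P : Set V)).1 ∈ t := fun v =>
      Finset.mem_filter.2 ⟨v.1.2, v.1.2, v.2⟩
    refine SimpleGraph.Colorable.chromaticNumber_le ⟨SimpleGraph.Coloring.mk
      (fun v => (⟨col v.1.1, hlt _ (hmem v)⟩ : Fin (cliqueNumOn H s))) fun {u v} huv e => ?_⟩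
    exact hcol _ (hmem u) _ (hmem v) huv (congrArg Fin.val e)
  · obtain ⟨K, hK, hKc, hcard⟩ := exists_clique_card_eq (G := H) s
    have hc : (K.subtype (· ∈ s)).card = K.card := by
      rw [Finset.card_subtype, Finset.filter_true_of_mem]
      exact fun v hv => hK hv
    rw [← hcard, ← hc]
    refine SimpleGraph.IsClique.card_le_chromaticNumber ?_
    intro x hx y hy hxy
    exact hKc (Finset.mem_subtype.1 hx) (Finset.mem_subtype.1 hy) fun e => hxy (Subtype.ext e)

end Conversion

/-- If every (F, C₄, C₃)-free graph is 3-colorable, then every (F, C₄, bull)-free graph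
is perfectly divisible. -/
theorem F_C4_bull_free_perfectlyDivisible {γ : Type} [Fintype γ] (F : SimpleGraph γ)
    (h3col : ∀ (V : Type) [Fintype V] (G : SimpleGraph V),
        IsFree G F → IsFree G (SimpleGraph.cycleGraph 4) →
        IsFree G (SimpleGraph.cycleGraph 3) → G.Colorable 3)
    {V : Type} [Fintype V] (G : SimpleGraph V)
    (hF : IsFree G F) (hC4 : IsFree G (SimpleGraph.cycleGraph 4))
    (hbull : IsFree G bull) :
    PerfectlyDivisible G := by
  classical
  intro s hs
  obtain ⟨S, rfl⟩ := s.toFinite.exists_finset_coe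
  obtain ⟨P, W, hPW, hdisj, hP, hlt⟩ := exists_division hC4 hbull (fun s htri => by
    obtain ⟨c⟩ := h3col (s : Set V) (G.induce (s : Set V)) (hF.induce _) (hC4.induce _) (by
      rintro ⟨f, hf⟩
      exact htri _ (f 0).2 _ (f 1).2 _ (f 2).2 ((hf 0 1).2 (by decide)) ((hf 0 2).2 (by decide))
        ((hf 1 2).2 (by decide)))
    refine ⟨fun v => if h : v ∈ (s : Set V) then c ⟨v, h⟩ else 0, fun u hu v hv huv => ?_⟩
    have hu' : u ∈ (s : Set V) := hu
    have hv' : v ∈ (s : Set V) := hv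
    simp only [dif_pos hu', dif_pos hv']
    exact c.valid (v := ⟨u, hu'⟩) (w := ⟨v, hv'⟩) huv) S (by simpa using hs) (fun _ => 1)
    (fun _ => one_pos)
  refine ⟨P, W, by rw [← Finset.coe_union, hPW], by
    rw [← Finset.coe_inter, Finset.disjoint_iff_inter_eq_empty.1 hdisj, Finset.coe_empty],
    hP.isPerfect, ?_⟩
  obtain ⟨L, hL, hLc, hcard⟩ := exists_clique_card_eq (G := G) (W : Set V)
  obtain ⟨K, hK, hKc, hlt'⟩ := hlt L (by simpa using hL) hLc
  simp only [Finset.sum_const, smul_eq_mul, mul_one] at hlt'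
  exact hcard ▸ hlt'.trans_le (card_le_cliqueNumOn (by simpa using hK) hKc)
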